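/- arXiv:2102.02400 — 10 statements merged into one kernel-verified Lean document; each statement's English description precedes it below -/
import Mathlib

section
/- Let C ≥ 2 and m ≥ 1. Let T and T⋆ be invertible C×C real matrices that are column stochastic and diagonally dominant (T_ii > T_ji and (T⋆)_ii > (T⋆)_ji for all j ≠ i). Let H and H⋆ be C×m real matrices with nonnegative entries whose columns each sum to 1. Assume (i) T⋆ H⋆ = T H, (ii) H is sufficiently scattered, and (iii) |det T⋆| ≤ |det T|. Then T⋆ = T and H⋆ = H. -/
open Matrix BigOperators

/-- Euclidean norm of a vector in `ℝ^C`. -/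
noncomputable def euclNorm {C : ℕ} (v : Fin C → ℝ) : ℝ :=
  Real.sqrt (∑ i, v i ^ 2)

/-- The conical hull of the columns of a matrix `M`. -/
def coneOf {C m : ℕ} (M : Matrix (Fin C) (Fin m) ℝ) : Set (Fin C → ℝ) :=
  {v | ∃ α : Fin m → ℝ, (∀ j, 0 ≤ α j) ∧ v = M.mulVec α}

/-- The second-order cone `R = {v : ∑ i, v i ≥ √(C-1) ‖v‖₂}`. -/
noncomputable def Rcone (C : ℕ) : Set (Fin C → ℝ) :=
  {v | Real.sqrt ((C : ℝ) - 1) * euclNorm v ≤ ∑ i, v i}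

/-- `Q` is a permutation matrix. -/
def IsPermMatrix {C : ℕ} (Q : Matrix (Fin C) (Fin C) ℝ) : Prop :=
  ∃ σ : Equiv.Perm (Fin C), ∀ i j, Q i j = if i = σ j then 1 else 0

/-- `H` is sufficiently scattered. -/
noncomputable def SuffScattered {C m : ℕ} (H : Matrix (Fin C) (Fin m) ℝ) : Prop :=
  Rcone C ⊆ coneOf H ∧
    ∀ Q : Matrix (Fin C) (Fin C) ℝ, Qᵀ * Q = 1 → ¬ IsPermMatrix Q →
      ¬ (coneOf H ⊆ coneOf Q)

/-- `T` is column stochastic. -/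
def ColStochastic {C : ℕ} (T : Matrix (Fin C) (Fin C) ℝ) : Prop :=
  (∀ i j, 0 ≤ T i j) ∧ ∀ j, ∑ i, T i j = 1

/-- `T` is diagonally dominant in the label-noise sense: `T_ii > T_ji` for `j ≠ i`. -/
def DiagDominant {C : ℕ} (T : Matrix (Fin C) (Fin C) ℝ) : Prop :=
  ∀ i j, j ≠ i → T j i < T i i

/-- The dual cone of a set `S ⊆ ℝ^C`. -/
def dualCone {C : ℕ} (S : Set (Fin C → ℝ)) : Set (Fin C → ℝ) :=
  {y | ∀ x ∈ S, 0 ≤ ∑ i, y i * x i}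

lemma mem_Rcone_aux {C : ℕ} (hC : 2 ≤ C) (x : Fin C → ℝ) (h0 : 0 ≤ ∑ i, x i)
    (h : ((C : ℝ) - 1) * ∑ i, x i ^ 2 ≤ (∑ i, x i) ^ 2) : x ∈ Rcone C := by
  have hc : (2 : ℝ) ≤ C := by exact_mod_cast hC
  show Real.sqrt ((C : ℝ) - 1) * Real.sqrt (∑ i, x i ^ 2) ≤ ∑ i, x i
  rw [← Real.sqrt_mul (by linarith)]
  exact Real.sqrt_le_iff.2 ⟨h0, h⟩

lemma dual_Rcone_aux {C : ℕ} (hC : 2 ≤ C) (y : Fin C → ℝ)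
    (h : ∀ x ∈ Rcone C, 0 ≤ ∑ i, y i * x i) :
    0 ≤ ∑ i, y i ∧ ∑ i, y i ^ 2 ≤ (∑ i, y i) ^ 2 := by
  have hc : (2 : ℝ) ≤ C := by exact_mod_cast hC
  constructor
  · have := h (fun _ => 1) (mem_Rcone_aux hC _ (by simp) (by simp; nlinarith))
    simpa using this
  by_contra hlt
  push Not at hlt
  set S := ∑ i, y i with hS
  set Y := ∑ i, y i ^ 2 with hY
  obtain ⟨U, hU⟩ : ∃ U, U = Y - S ^ 2 / C := ⟨_, rfl⟩
  have hUc : (C : ℝ) * U = C * Y - S ^ 2 := by rw [hU]; field_simp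
  have hUpos : 0 < U := by nlinarith [sq_nonneg S]
  obtain ⟨a, ha⟩ : ∃ a, a = Real.sqrt (((C : ℝ) - 1) / C * U) := ⟨_, rfl⟩
  have ha0 : 0 ≤ a := ha ▸ Real.sqrt_nonneg _
  have ha2 : (C : ℝ) * a ^ 2 = (C - 1) * U := by
    rw [ha, Real.sq_sqrt]
    · field_simp
    · have : 0 ≤ (C : ℝ) - 1 := by linarith
      positivity
  have hx1 : ∑ i, (a + S / C - y i) = C * a := by
    rw [Finset.sum_sub_distrib, ← hS]
    simp
    field_simp
    ring
  have hx2 : ∑ i, (a + S / C - y i) ^ 2 = C * a ^ 2 + U := by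
    have : ∀ i, (a + S / C - y i) ^ 2 = (a + S / C) ^ 2 - 2 * (a + S / C) * y i + y i ^ 2 := by
      intro i; ring
    simp_rw [this]
    rw [Finset.sum_add_distrib, Finset.sum_sub_distrib, ← Finset.mul_sum, ← hS, ← hY, hU]
    simp
    field_simp
    ring
  have hx3 : ∑ i, y i * (a + S / C - y i) = a * S - U := by
    have : ∀ i, y i * (a + S / C - y i) = (a + S / C) * y i - y i ^ 2 := by
      intro i; ring
    simp_rw [this]
    rw [Finset.sum_sub_distrib, ← Finset.mul_sum, ← hS, ← hY, hU]
    ring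
  have hmem := h (fun i => a + S / C - y i) (mem_Rcone_aux hC _ (by rw [hx1]; positivity) (by
    rw [hx1, hx2]
    have : ((C : ℝ) * a) ^ 2 = C * (C * a ^ 2) := by ring
    rw [this, ha2]; apply le_of_eq; ring))
  rw [hx3] at hmem
  have h1 : U ^ 2 ≤ (a * S) ^ 2 := pow_le_pow_left₀ hUpos.le (by linarith) 2
  have h2 : (C : ℝ) * U ^ 2 ≤ (C - 1) * U * S ^ 2 := by
    rw [← ha2]; nlinarith
  have h3 : (C : ℝ) * U ≤ (C - 1) * S ^ 2 := by
    by_contra h4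
    push Not at h4
    nlinarith
  nlinarith

lemma all_one_aux {n : ℕ} (l : Fin n → ℝ) (hpos : ∀ i, 0 < l i) (hp : 1 ≤ ∏ i, l i)
    (hs : ∑ i, l i ≤ n) : ∀ i, l i = 1 := by
  have h1 : 0 ≤ ∑ i, Real.log (l i) := by
    rw [← Real.log_prod (fun i _ => (hpos i).ne')]
    exact Real.log_nonneg hp
  have h2 : ∀ i ∈ Finset.univ, 0 ≤ l i - 1 - Real.log (l i) := fun i _ => by
    linarith [Real.log_le_sub_one_of_pos (hpos i)]
  have h3 : ∑ i, (l i - 1 - Real.log (l i)) = 0 := by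
    apply le_antisymm _ (Finset.sum_nonneg h2)
    rw [Finset.sum_sub_distrib, Finset.sum_sub_distrib]
    simp
    linarith
  intro i
  by_contra hne
  have := (Finset.sum_eq_zero_iff_of_nonneg h2).1 h3 i (Finset.mem_univ i)
  linarith [Real.log_lt_sub_one_of_pos (hpos i) hne]

lemma prod_le_one_aux {n : ℕ} (l : Fin n → ℝ) (hpos : ∀ i, 0 < l i)
    (hs : ∑ i, l i ≤ n) : ∏ i, l i ≤ 1 := by
  by_contra h
  push Not at h
  have := all_one_aux l hpos h.le hs
  simp [this] at h

lemma orth_aux {n : ℕ} (B : Matrix (Fin n) (Fin n) ℝ) (hd : 1 ≤ |B.det|)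
    (hr : ∀ i, ∑ j, B i j ^ 2 ≤ 1) : B * Bᵀ = 1 := by
  have hps : (B * Bᵀ).PosSemidef := by
    simpa using Matrix.posSemidef_self_mul_conjTranspose B
  have hH := hps.isHermitian
  have hdet : 1 ≤ ∏ i, hH.eigenvalues i := by
    have := hH.det_eq_prod_eigenvalues
    simp at this
    rw [← this, ← abs_mul_abs_self]
    nlinarith
  have hnn := hps.eigenvalues_nonneg
  have hpos : ∀ i, 0 < hH.eigenvalues i := by
    intro i
    refine lt_of_le_of_ne (hnn i) fun h0 => ?_
    rw [Finset.prod_eq_zero (Finset.mem_univ i) h0.symm] at hdet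
    linarith
  have htr : ∑ i, hH.eigenvalues i ≤ n := by
    have := hH.trace_eq_sum_eigenvalues
    simp at this
    rw [← this, Matrix.trace]
    calc _ ≤ ∑ i : Fin n, (1 : ℝ) := Finset.sum_le_sum fun i _ => by
          have := hr i
          simpa [Matrix.mul_apply, pow_two] using this
      _ = n := by simp
  have hone := all_one_aux _ hpos hdet htr
  have := hH.spectral_theorem
  have he : hH.eigenvalues = fun _ => 1 := funext hone
  rw [he] at this
  have h1 : (Matrix.diagonal (RCLike.ofReal ∘ fun _ : Fin n => (1 : ℝ)) : Matrix (Fin n) (Fin n) ℝ) = 1 := by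
    ext i j; simp [Matrix.diagonal_apply, Matrix.one_apply]
  rw [h1, map_one] at this
  exact this

lemma orth_of_dual_aux {C : ℕ} (A : Matrix (Fin C) (Fin C) ℝ) (hd : 1 ≤ |A.det|)
    (hcol : ∀ j, ∑ i, A i j = 1) (h0 : ∀ i, 0 ≤ ∑ j, A i j)
    (hr : ∀ i, ∑ j, A i j ^ 2 ≤ (∑ j, A i j) ^ 2) : A * Aᵀ = 1 := by
  obtain ⟨s, hs⟩ : ∃ s : Fin C → ℝ, s = fun i => ∑ j, A i j := ⟨_, rfl⟩
  have hs' : ∀ i, ∑ j, A i j = s i := fun i => by rw [hs]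
  simp_rw [hs'] at h0 hr
  have hpos : ∀ i, 0 < s i := by
    intro i
    refine lt_of_le_of_ne (h0 i) fun hz => ?_
    have h1 := hr i
    rw [← hz] at h1
    have h2 : ∑ j, A i j ^ 2 = 0 :=
      le_antisymm (by simpa using h1) (Finset.sum_nonneg fun _ _ => sq_nonneg _)
    have h3 : ∀ j, A i j = 0 := fun j => by
      have := (Finset.sum_eq_zero_iff_of_nonneg (fun _ _ => sq_nonneg _)).1 h2 j (Finset.mem_univ j)
      simpa using this
    rw [Matrix.det_eq_zero_of_row_eq_zero i h3] at hd
    simp at hd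
    linarith
  have hsum : ∑ i, s i = C := by
    have h1 : ∑ i, s i = ∑ i, ∑ j, A i j := Finset.sum_congr rfl fun i _ => (hs' i).symm
    have h2 : ∑ i, ∑ j, A i j = ∑ j, ∑ i, A i j := Finset.sum_comm
    rw [h1, h2]
    simp [hcol]
  have hprod := prod_le_one_aux s hpos hsum.le
  have hprodpos : 0 < ∏ i, s i := Finset.prod_pos fun i _ => hpos i
  obtain ⟨B, hB⟩ : ∃ B : Matrix (Fin C) (Fin C) ℝ, B = Matrix.diagonal (fun i => (s i)⁻¹) * A := ⟨_, rfl⟩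
  have hBdet : |B.det| = (∏ i, s i)⁻¹ * |A.det| := by
    rw [hB, Matrix.det_mul, Matrix.det_diagonal, Finset.prod_inv_distrib, abs_mul,
      abs_of_pos (inv_pos.2 hprodpos)]
  have hBe : ∀ i j, B i j = (s i)⁻¹ * A i j := fun i j => by
    rw [hB, Matrix.diagonal_mul]
  have hBB := orth_aux B (by
      rw [hBdet]
      have := (one_le_inv₀ hprodpos).2 hprod
      nlinarith) (by
      intro i
      simp_rw [hBe, mul_pow]
      rw [← Finset.mul_sum]
      have := hpos i
      calc _ ≤ (s i)⁻¹ ^ 2 * (s i) ^ 2 := by gcongr; exact hr i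
        _ = 1 := by field_simp)
  have hdB : |B.det| = 1 := by
    have h1 := congrArg Matrix.det hBB
    rw [Matrix.det_mul, Matrix.det_transpose, Matrix.det_one] at h1
    have : |B.det| * |B.det| = 1 := by rw [abs_mul_abs_self, h1]
    nlinarith [abs_nonneg B.det]
  have hp1 : 1 ≤ ∏ i, s i := by
    rw [hBdet] at hdB
    field_simp at hdB
    linarith
  have hs1 := all_one_aux s hpos hp1 hsum.le
  have : B = A := by
    ext i j
    rw [hBe, hs1]; simp
  rwa [this] at hBB

/-- Theorem 1 (matrix form): volume minimization identifies the true transition matrix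
and clean posterior under the sufficiently scattered assumption. -/
theorem volume_minimization_identifiability
    {C m : ℕ} (hC : 2 ≤ C) (hm : 1 ≤ m)
    (T Tstar : Matrix (Fin C) (Fin C) ℝ)
    (hTinv : IsUnit T.det) (hTstarinv : IsUnit Tstar.det)
    (hTcs : ColStochastic T) (hTstarcs : ColStochastic Tstar)
    (hTdd : DiagDominant T) (hTstardd : DiagDominant Tstar)
    (H Hstar : Matrix (Fin C) (Fin m) ℝ)
    (hHnn : ∀ i j, 0 ≤ H i j) (hHstarnn : ∀ i j, 0 ≤ Hstar i j)
    (hHcol : ∀ j, ∑ i, H i j = 1) (hHstarcol : ∀ j, ∑ i, Hstar i j = 1)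
    (heq : Tstar * Hstar = T * H)
    (hscatter : SuffScattered H)
    (hdet : |Tstar.det| ≤ |T.det|) :
    Tstar = T ∧ Hstar = H := by
  obtain ⟨A, hA⟩ : ∃ A, A = Tstar⁻¹ * T := ⟨_, rfl⟩
  have hTA : Tstar * A = T := by rw [hA, Matrix.mul_nonsing_inv_cancel_left _ _ hTstarinv]
  have hAH : A * H = Hstar := by
    rw [hA, Matrix.mul_assoc, ← heq, Matrix.nonsing_inv_mul_cancel_left _ _ hTstarinv]
  have hcol : ∀ j, ∑ i, A i j = 1 := by
    intro j
    have h1 := hTcs.2 j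
    rw [← hTA] at h1
    simp_rw [Matrix.mul_apply] at h1
    rw [Finset.sum_comm] at h1
    simp_rw [← Finset.sum_mul, hTstarcs.2, one_mul] at h1
    exact h1
  have hd : 1 ≤ |A.det| := by
    have h1 := congrArg Matrix.det hTA
    rw [Matrix.det_mul] at h1
    rw [← h1, abs_mul] at hdet
    have : 0 < |Tstar.det| := abs_pos.2 hTstarinv.ne_zero
    by_contra hlt
    push Not at hlt
    nlinarith
  have hnn : ∀ α : Fin m → ℝ, (∀ j, 0 ≤ α j) → ∀ i, 0 ≤ (Hstar *ᵥ α) i := by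
    intro α hα i
    show 0 ≤ ∑ j, Hstar i j * α j
    exact Finset.sum_nonneg fun j _ => mul_nonneg (hHstarnn i j) (hα j)
  have hdual : ∀ i, ∀ x ∈ Rcone C, 0 ≤ ∑ j, A i j * x j := by
    intro i x hx
    obtain ⟨α, hα, rfl⟩ := hscatter.1 hx
    have : ∑ j, A i j * (H *ᵥ α) j = (A *ᵥ (H *ᵥ α)) i := rfl
    rw [this, Matrix.mulVec_mulVec, hAH]
    exact hnn α hα i
  have horth : A * Aᵀ = 1 := orth_of_dual_aux A hd hcol
    (fun i => (dual_Rcone_aux hC _ (hdual i)).1) (fun i => (dual_Rcone_aux hC _ (hdual i)).2)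
  have hperm : IsPermMatrix Aᵀ := by
    by_contra hnp
    refine hscatter.2 Aᵀ (by simpa using horth) hnp ?_
    rintro x ⟨α, hα, rfl⟩
    refine ⟨Hstar *ᵥ α, hnn α hα, ?_⟩
    rw [← hAH, Matrix.mulVec_mulVec, ← Matrix.mul_assoc, mul_eq_one_comm.1 horth, Matrix.one_mul]
  obtain ⟨σ, hσ⟩ := hperm
  have hT : ∀ i j, T i (σ j) = Tstar i j := by
    intro i j
    rw [← hTA, Matrix.mul_apply, Finset.sum_eq_single j]
    · have := hσ (σ j) j
      rw [Matrix.transpose_apply] at this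
      simp [this]
    · intro k _ hk
      have := hσ (σ j) k
      rw [Matrix.transpose_apply] at this
      simp [this, hk.symm]
    · simp
  have hid : ∀ j, σ j = j := by
    intro j
    by_contra hne
    have h1 := hTdd (σ j) j (Ne.symm hne)
    have h2 := hTstardd j (σ j) hne
    rw [hT, hT] at h1
    linarith
  have hTT : Tstar = T := by
    ext i j
    rw [← hT, hid]
  refine ⟨hTT, ?_⟩
  rw [← hAH, hA, hTT, Matrix.nonsing_inv_mul _ hTinv, Matrix.one_mul]
end

section
/- Let C ≥ 2 and let H be a C×m real matrix with nonnegative entries such that every standard basis vector e_1, …, e_C of ℝ^C appears as a column of H. Then H is sufficiently scattered, i.e. (1) R ⊆ cone(H) and (2) for every real orthogonal C×C matrix Q that is not a permutation matrix, cone(H) is not a subset of cone(Q). -/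
open Matrix BigOperators

/-- Proposition 1 (sufficiency): if the columns of a nonnegative matrix `H` include all
standard basis vectors, then `H` is sufficiently scattered. -/
theorem anchor_points_imply_sufficiently_scattered
    {C m : ℕ} (hC : 2 ≤ C) (H : Matrix (Fin C) (Fin m) ℝ)
    (hHnn : ∀ i j, 0 ≤ H i j)
    (hanchor : ∀ i : Fin C, ∃ j : Fin m, (fun k => H k j) = Pi.single i 1) :
    SuffScattered H := by
  classical
  choose f hf using hanchor
  have hf' : ∀ i k, H k (f i) = if k = i then 1 else 0 := by
    intro i k
    have := congrFun (hf i) k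
    simpa [Pi.single_apply] using this
  have key : ∀ v : Fin C → ℝ, (∀ i, 0 ≤ v i) → v ∈ coneOf H := by
    intro v hv
    refine ⟨fun j => ∑ i, if f i = j then v i else 0, ?_, ?_⟩
    · intro j
      apply Finset.sum_nonneg
      intro i _
      split_ifs
      · exact hv i
      · exact le_rfl
    · funext k
      simp only [Matrix.mulVec, dotProduct, Finset.mul_sum]
      rw [Finset.sum_comm]
      simp [hf']
  refine ⟨?_, ?_⟩
  · intro v hv
    apply key
    intro k
    by_contra hk
    push Not at hk
    have hv' : Real.sqrt ((C : ℝ) - 1) * Real.sqrt (∑ i, v i ^ 2) ≤ ∑ i, v i := hv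
    have hC1 : (0 : ℝ) ≤ (C : ℝ) - 1 := by
      have : (2 : ℝ) ≤ C := by exact_mod_cast hC
      linarith
    have hq : 0 ≤ ∑ i, v i ^ 2 := Finset.sum_nonneg (fun i _ => sq_nonneg _)
    have h0 : 0 ≤ Real.sqrt ((C : ℝ) - 1) * Real.sqrt (∑ i, v i ^ 2) := by positivity
    have h1 : ((C : ℝ) - 1) * (∑ i, v i ^ 2) ≤ (∑ i, v i) ^ 2 := by
      have := pow_le_pow_left₀ h0 hv' 2
      rwa [mul_pow, Real.sq_sqrt hC1, Real.sq_sqrt hq] at this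
    have h2 := sq_sum_le_card_mul_sum_sq (s := Finset.univ.erase k) (f := v)
    have h3 : (((Finset.univ.erase k).card : ℕ) : ℝ) = (C : ℝ) - 1 := by
      rw [Finset.card_erase_of_mem (Finset.mem_univ k), Finset.card_univ, Fintype.card_fin,
        Nat.cast_sub (by omega)]
      simp
    rw [h3] at h2
    have h4 := Finset.add_sum_erase Finset.univ v (Finset.mem_univ k)
    have h5 := Finset.add_sum_erase Finset.univ (fun i => v i ^ 2) (Finset.mem_univ k)
    rw [← h5] at h1
    have h6 : 0 ≤ ((C : ℝ) - 1) * v k ^ 2 := by positivity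
    nlinarith
  · intro Q hQ hnp hsub
    apply hnp
    have hQ' : Q * Qᵀ = 1 := mul_eq_one_comm.mp hQ
    have hnn : ∀ i j, 0 ≤ Q i j := by
      intro i j
      obtain ⟨α, hα, he⟩ := hsub (key (Pi.single i 1) (by
        intro k
        by_cases h : k = i
        · subst h; simp
        · simp [h]))
      have : Qᵀ.mulVec (Pi.single i 1) = α := by
        rw [he, Matrix.mulVec_mulVec, hQ, Matrix.one_mulVec]
      have h2 := congrFun this j
      simp at h2
      rw [h2]
      exact hα j
    have hcol : ∀ j j', ∑ i, Q i j * Q i j' = if j = j' then 1 else 0 := by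
      intro j j'
      have := congrFun (congrFun hQ j) j'
      simpa [Matrix.mul_apply, Matrix.one_apply] using this
    have hrow : ∀ i i', ∑ j, Q i j * Q i' j = if i = i' then 1 else 0 := by
      intro j j'
      have := congrFun (congrFun hQ' j) j'
      simpa [Matrix.mul_apply, Matrix.one_apply] using this
    have hex : ∀ j, ∃ i, Q i j ≠ 0 := by
      intro j
      by_contra h
      push Not at h
      have := hcol j j
      simp [h] at this
    choose s hs using hex
    have hz : ∀ i j, i ≠ s j → Q i j = 0 := by
      intro i j hij
      have h := hrow i (s j)
      rw [if_neg hij, Finset.sum_eq_zero_iff_of_nonneg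
        (fun k _ => mul_nonneg (hnn _ _) (hnn _ _))] at h
      exact (mul_eq_zero.mp (h j (Finset.mem_univ j))).resolve_right (hs j)
    have h1 : ∀ j, Q (s j) j = 1 := by
      intro j
      have h := hcol j j
      rw [if_pos rfl, Finset.sum_eq_single (s j)
        (fun i _ hi => by rw [hz i j hi, zero_mul]) (by simp)] at h
      nlinarith [hnn (s j) j]
    have hinj : Function.Injective s := by
      intro j j' hjj
      by_contra hne
      have h := hcol j j'
      rw [if_neg hne, Finset.sum_eq_zero_iff_of_nonneg
        (fun k _ => mul_nonneg (hnn _ _) (hnn _ _))] at h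
      have h' := h (s j) (Finset.mem_univ _)
      rw [h1 j, hjj, h1 j'] at h'
      norm_num at h'
    refine ⟨Equiv.ofBijective s (Finite.injective_iff_bijective.mp hinj), ?_⟩
    intro i j
    simp only [Equiv.ofBijective_apply]
    split_ifs with h
    · rw [h]; exact h1 j
    · exact hz i j h
end

section
/- For every C ≥ 3, there exist m ≥ 1 and a C×m real matrix H such that every column of H lies in the probability simplex (nonnegative entries summing to 1), no column of H equals a standard basis vector of ℝ^C, and H is sufficiently scattered. -/
open Matrix BigOperators

lemma aux_R {C : ℕ} (hC : 3 ≤ C) {v : Fin C → ℝ} (hv : v ∈ Rcone C) :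
    0 ≤ ∑ i, v i ∧ ∀ k, (C : ℝ) * v k ^ 2 ≤ 2 * (∑ i, v i) * v k := by
  have hC' : (3 : ℝ) ≤ C := by exact_mod_cast hC
  unfold Rcone euclNorm at hv
  simp only [Set.mem_ofPred_eq] at hv
  have hS : 0 ≤ ∑ i, v i := le_trans (by positivity) hv
  refine ⟨hS, fun k => ?_⟩
  rw [← Real.sqrt_mul (by linarith)] at hv
  have h1 := (Real.sqrt_le_left hS).1 hv
  have h2 : (∑ i ∈ Finset.univ.erase k, v i) ^ 2 ≤
      ((Finset.univ.erase k).card : ℝ) * ∑ i ∈ Finset.univ.erase k, v i ^ 2 := sq_sum_le_card_mul_sum_sq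
  have h3 := Finset.add_sum_erase Finset.univ v (Finset.mem_univ k)
  have h4 := Finset.add_sum_erase Finset.univ (fun i => v i ^ 2) (Finset.mem_univ k)
  have h5 : ((Finset.univ.erase k).card : ℝ) = C - 1 := by
    rw [Finset.card_erase_of_mem (Finset.mem_univ k), Finset.card_univ, Fintype.card_fin,
      Nat.cast_sub (by omega)]
    simp
  rw [h5] at h2
  rw [← h4] at h1
  rw [← h3] at h1 ⊢
  nlinarith

lemma aux_q {C : ℕ} (hC : 3 ≤ C) {q : Fin C → ℝ} (h1 : ∑ i, q i ^ 2 = 1)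
    (h : ∀ i j, i ≠ j → 0 ≤ (C : ℝ) * q i + q j) :
    1 ≤ (∑ i, q i) ^ 2 ∧ ((∑ i, q i) ^ 2 = 1 → ∃ k, ∀ i, q i = if i = k then 1 else 0) := by
  have hC' : (3 : ℝ) ≤ C := by exact_mod_cast hC
  by_cases hq : ∀ i, 0 ≤ q i
  · have hle : ∀ i, q i ≤ ∑ i, q i := fun i =>
      Finset.single_le_sum (fun j _ => hq j) (Finset.mem_univ i)
    have hnn : ∀ i ∈ Finset.univ, 0 ≤ q i * ((∑ i, q i) - q i) := fun i _ =>
      mul_nonneg (hq i) (by linarith [hle i])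
    have heq : ∑ i, q i * ((∑ i, q i) - q i) = (∑ i, q i) ^ 2 - 1 := by
      simp only [mul_sub]
      rw [Finset.sum_sub_distrib, ← Finset.sum_mul, ← h1]
      simp only [sq]
    refine ⟨by linarith [Finset.sum_nonneg hnn], fun hs => ?_⟩
    have hs1 : ∑ i, q i = 1 := by
      have := Finset.sum_nonneg (fun i (_ : i ∈ Finset.univ) => hq i)
      nlinarith
    rw [hs, sub_self, Finset.sum_eq_zero_iff_of_nonneg hnn] at heq
    obtain ⟨k, hk⟩ : ∃ k, q k ≠ 0 := by
      by_contra! hc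
      simp [hc] at hs1
    have hk1 : q k = 1 := by
      rcases mul_eq_zero.1 (heq k (Finset.mem_univ k)) with h' | h'
      · exact absurd h' hk
      · linarith
    refine ⟨k, fun i => ?_⟩
    split_ifs with hi
    · rw [hi, hk1]
    · have h3 := Finset.add_sum_erase Finset.univ q (Finset.mem_univ k)
      have h4 : q i ≤ ∑ i ∈ Finset.univ.erase k, q i :=
        Finset.single_le_sum (fun j _ => hq j) (by simp [hi])
      linarith [hq i]
  · push Not at hq
    obtain ⟨k, hk⟩ := hq
    have hj : ∀ j, j ≠ k → -3 * q k ≤ q j := fun j hj => by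
      nlinarith [h k j hj.symm]
    have h3 := Finset.add_sum_erase Finset.univ q (Finset.mem_univ k)
    have h4 := Finset.add_sum_erase Finset.univ (fun i => q i ^ 2) (Finset.mem_univ k)
    set s := ∑ i ∈ Finset.univ.erase k, q i with hs
    have h5 : ∀ j ∈ Finset.univ.erase k, q j * (-3 * q k) ≤ q j * (s - q j) := by
      intro j hjm
      have hjk : j ≠ k := by simpa using hjm
      have hjp := hj j hjk
      refine mul_le_mul_of_nonneg_left ?_ (by linarith)
      obtain ⟨i, hi⟩ : ∃ i, i ∉ ({j, k} : Finset (Fin C)) := by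
        by_contra! hc
        have := Finset.card_le_card (show (Finset.univ : Finset (Fin C)) ⊆ {j, k} from
          fun i _ => hc i)
        have h2 := Finset.card_le_two (a := j) (b := k)
        simp at this
        omega
      simp at hi
      have h6 := Finset.add_sum_erase (Finset.univ.erase k) q hjm
      have h7 : q i ≤ ∑ i ∈ (Finset.univ.erase k).erase j, q i :=
        Finset.single_le_sum (f := q) (fun l hl => by
          have : l ≠ k := by simp at hl; exact hl.2
          linarith [hj l this]) (by simp [hi])
      linarith [hj i hi.2]
    have h6 := Finset.sum_le_sum h5
    rw [← Finset.sum_mul, ← hs] at h6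
    have h7 : ∑ i ∈ Finset.univ.erase k, q i * (s - q i) =
        s ^ 2 - ∑ i ∈ Finset.univ.erase k, q i ^ 2 := by
      simp only [mul_sub]
      rw [Finset.sum_sub_distrib, ← Finset.sum_mul, ← hs]
      simp only [sq]
    have hspos : 0 < s := by
      refine Finset.sum_pos (fun j hj' => ?_) ?_
      · have : j ≠ k := by simpa using hj'
        linarith [hj j this]
      · rw [← Finset.card_pos, Finset.card_erase_of_mem (Finset.mem_univ k)]
        simp; omega
    have hpos : 0 < s * (-q k) := mul_pos hspos (by linarith)
    have : 1 < (∑ i, q i) ^ 2 := by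
      rw [← h3]
      nlinarith
    exact ⟨this.le, fun h' => absurd h' this.ne'⟩

lemma aux_perm {C : ℕ} (hC : 3 ≤ C) {Q : Matrix (Fin C) (Fin C) ℝ} (hQ : Qᵀ * Q = 1)
    (h : ∀ k i j, i ≠ j → 0 ≤ (C : ℝ) * Q i k + Q j k) : IsPermMatrix Q := by
  have hQ' : Q * Qᵀ = 1 := mul_eq_one_comm.1 hQ
  have hn : ∀ k, ∑ i, Q i k ^ 2 = 1 := fun k => by
    have := congrFun (congrFun hQ k) k
    simpa [Matrix.mul_apply, sq] using this
  have hq := fun k => aux_q hC (hn k) (h k)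
  have hsum : ∑ k, (∑ i, Q i k) ^ 2 = C := by
    have h1 : ∀ i j, ∑ k, Q i k * Q j k = if i = j then 1 else 0 := fun i j => by
      have := congrFun (congrFun hQ' i) j
      simpa [Matrix.mul_apply, Matrix.one_apply] using this
    simp only [sq, Finset.sum_mul_sum]
    rw [Finset.sum_comm]
    have : ∀ i, ∑ k, ∑ j, Q i k * Q j k = 1 := fun i => by
      rw [Finset.sum_comm]; simp [h1]
    simp [this]
  have hall : ∀ k, (∑ i, Q i k) ^ 2 = 1 := by
    have h0 : ∑ k, ((∑ i, Q i k) ^ 2 - 1) = 0 := by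
      rw [Finset.sum_sub_distrib, hsum]; simp
    rw [Finset.sum_eq_zero_iff_of_nonneg (fun k _ => by linarith [(hq k).1])] at h0
    intro k
    linarith [h0 k (Finset.mem_univ k)]
  choose f hf using fun k => (hq k).2 (hall k)
  have hinj : Function.Injective f := by
    intro a b hab
    by_contra hne
    have := congrFun (congrFun hQ a) b
    simp [Matrix.mul_apply, hf, hab, Matrix.one_apply, hne] at this
  refine ⟨Equiv.ofBijective f (Finite.injective_iff_bijective.1 hinj), fun i j => ?_⟩
  simpa using hf j i

/-- The column attached to a pair. -/
noncomputable def colv {C : ℕ} (p : Fin C × Fin C) : Fin C → ℝ := fun l =>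
  if p.1 = p.2 then 1 / C else
    ((C : ℝ) * (if l = p.1 then 1 else 0) + (if l = p.2 then 1 else 0)) / (C + 1)

lemma cone_add {C m : ℕ} {M : Matrix (Fin C) (Fin m) ℝ} {x y : Fin C → ℝ}
    (hx : x ∈ coneOf M) (hy : y ∈ coneOf M) : x + y ∈ coneOf M := by
  obtain ⟨a, ha, rfl⟩ := hx
  obtain ⟨b, hb, rfl⟩ := hy
  exact ⟨a + b, fun j => add_nonneg (ha j) (hb j), (Matrix.mulVec_add M a b).symm⟩

lemma cone_zero {C m : ℕ} {M : Matrix (Fin C) (Fin m) ℝ} : 0 ∈ coneOf M :=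
  ⟨0, fun _ => le_rfl, by simp⟩

lemma cone_smul {C m : ℕ} {M : Matrix (Fin C) (Fin m) ℝ} {x : Fin C → ℝ} {c : ℝ} (hc : 0 ≤ c)
    (hx : x ∈ coneOf M) : c • x ∈ coneOf M := by
  obtain ⟨a, ha, rfl⟩ := hx
  exact ⟨c • a, fun j => mul_nonneg hc (ha j), (Matrix.mulVec_smul M c a).symm⟩

lemma cone_sum {C m : ℕ} {M : Matrix (Fin C) (Fin m) ℝ} {ι : Type*} (s : Finset ι)
    (x : ι → Fin C → ℝ) (hx : ∀ i ∈ s, x i ∈ coneOf M) : ∑ i ∈ s, x i ∈ coneOf M := 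
  Finset.sum_induction x (· ∈ coneOf M) (fun _ _ => cone_add) cone_zero hx

lemma aux_mem {C m : ℕ} (hC : 3 ≤ C) {M : Matrix (Fin C) (Fin m) ℝ}
    (hM : ∀ p : Fin C × Fin C, colv p ∈ coneOf M) : Rcone C ⊆ coneOf M := by
  intro v hv
  have hC' : (3 : ℝ) ≤ C := by exact_mod_cast hC
  obtain ⟨hS, hk⟩ := aux_R hC hv
  set S := ∑ i, v i with hSdef
  have hv0 : ∀ k, 0 ≤ v k := fun k => by
    by_contra! hc
    nlinarith [hk k, mul_nonneg hS (neg_nonneg.2 hc.le), mul_pos_of_neg_of_neg hc hc]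
  rcases hS.eq_or_lt with h0 | hpos
  · have : v = 0 := by
      ext k
      have := hk k
      rw [← h0] at this
      simp only [mul_zero, zero_mul] at this
      have : v k ^ 2 ≤ 0 := by nlinarith [sq_nonneg (v k)]
      simpa using pow_eq_zero_iff (two_ne_zero) |>.1 (le_antisymm this (sq_nonneg _))
    rw [this]; exact cone_zero
  have hub : ∀ k, C * v k ≤ 2 * S := fun k => by
    rcases (hv0 k).eq_or_lt with h | h
    · rw [← h]; linarith
    · have := hk k
      by_contra! hc
      nlinarith
  haveI : Nonempty (Fin C) := ⟨⟨0, by omega⟩⟩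
  obtain ⟨k, hkmax⟩ := Finite.exists_max v
  have hlb : S ≤ C * v k := by
    have := Finset.sum_le_card_nsmul Finset.univ v (v k) (fun i _ => hkmax i)
    simpa using this
  have h3 := Finset.add_sum_erase Finset.univ v (Finset.mem_univ k)
  set W := ∑ i ∈ Finset.univ.erase k, v i with hW
  rw [← hSdef] at h3
  have hWpos : 0 < W := by nlinarith [hub k]
  have h1 : W ≤ C * v k := by linarith [hv0 k]
  have h2 : v k ≤ C * W := by nlinarith [hub k]
  set r := v k / W with hr
  have hr1 : 1 ≤ C * r := by rw [hr, ← mul_div_assoc, le_div_iff₀ hWpos]; linarith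
  have hr2 : r ≤ C := by rw [hr, div_le_iff₀ hWpos]; linarith
  have hrW : r * W = v k := by rw [hr]; field_simp
  have hC1 : (0 : ℝ) < C - 1 := by linarith
  have hv' : v = ∑ j ∈ Finset.univ.erase k, v j •
      (((C * r - 1) / (C - 1)) • colv (k, j) + ((C - r) / (C - 1)) • colv (j, k)) := by
    ext l
    rw [Finset.sum_apply]
    by_cases hl : l = k
    · subst hl
      rw [← hrW, hW, Finset.mul_sum]
      refine Finset.sum_congr rfl fun j hj => ?_
      have hj' : j ≠ l := by simpa using hj
      simp [colv, hj', hj'.symm]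
      field_simp
      ring
    · rw [Finset.sum_eq_single_of_mem l (by simp [hl])]
      · simp [colv, hl, Ne.symm hl]
        field_simp
        ring
      · intro j hj hjl
        have hj' : j ≠ k := by simpa using hj
        simp [colv, hl, hj', hj'.symm, hjl.symm]
  rw [hv']
  refine cone_sum _ _ fun j _ => cone_smul (hv0 j) (cone_add ?_ ?_)
  · exact cone_smul (div_nonneg (by linarith) hC1.le) (hM _)
  · exact cone_smul (div_nonneg (by linarith) hC1.le) (hM _)

theorem sufficiently_scattered_without_anchor_points
    (C : ℕ) (hC : 3 ≤ C) :
    ∃ m : ℕ, 1 ≤ m ∧ ∃ H : Matrix (Fin C) (Fin m) ℝ,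
      (∀ j, (∀ i, 0 ≤ H i j) ∧ ∑ i, H i j = 1) ∧
      (∀ j : Fin m, ∀ i : Fin C, (fun k => H k j) ≠ Pi.single i 1) ∧
      SuffScattered H := by
  have hC' : (3 : ℝ) ≤ C := by exact_mod_cast hC
  have hcol : ∀ p : Fin C × Fin C, colv p ∈ coneOf
      (Matrix.of fun i (j : Fin (C * C)) => colv (finProdFinEquiv.symm j) i) := fun p => by
    refine ⟨Pi.single (finProdFinEquiv p) 1, fun j => ?_, ?_⟩
    · by_cases h : j = finProdFinEquiv p
      · subst h; simp
      · simp [h]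
    · ext i
      rw [Matrix.mulVec_single_one]
      simp only [Matrix.col_apply, Matrix.of_apply, Equiv.symm_apply_apply]
  refine ⟨C * C, by nlinarith, Matrix.of fun i j => colv (finProdFinEquiv.symm j) i, ?_, ?_,
    aux_mem hC hcol, ?_⟩
  · intro j
    simp only [Matrix.of_apply]
    generalize finProdFinEquiv.symm j = p
    unfold colv
    refine ⟨fun i => by positivity, ?_⟩
    by_cases hp : p.1 = p.2
    · simp [hp]
      field_simp
    · simp only [hp, if_false]
      rw [← Finset.sum_div, Finset.sum_add_distrib, ← Finset.mul_sum]
      simp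
      have : (C : ℝ) + 1 ≠ 0 := by linarith
      exact this
  · intro j i hji
    have h1 := congrFun hji i
    simp only [Matrix.of_apply, Pi.single_eq_same] at h1
    revert h1
    generalize finProdFinEquiv.symm j = p
    unfold colv
    apply ne_of_lt
    by_cases hp : p.1 = p.2
    · simp only [hp, if_true]
      rw [div_lt_one] <;> linarith
    · simp only [hp, if_false]
      rw [div_lt_one (by linarith)]
      by_cases h1 : i = p.1
      · have h2 : i ≠ p.2 := fun h => hp (h1.symm.trans h)
        simp [h1, hp]
      · simp only [h1, if_false]
        split_ifs <;> linarith
  · intro Q hQ hnp hsub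
    apply hnp
    apply aux_perm hC hQ
    intro k i j hij
    obtain ⟨α, hα, he⟩ := hsub (hcol (i, j))
    have h1 : Qᵀ.mulVec (colv (i, j)) = α := by
      rw [he, Matrix.mulVec_mulVec, hQ, Matrix.one_mulVec]
    have h2 := hα k
    rw [← h1] at h2
    have h3 : Qᵀ.mulVec (colv (i, j)) k = (C * Q i k + Q j k) / (C + 1) := by
      simp only [Matrix.mulVec, dotProduct, colv, hij, if_false, Matrix.transpose_apply]
      simp only [mul_div_assoc', ← Finset.sum_div, mul_add, Finset.sum_add_distrib]
      simp [mul_comm]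
    rw [h3, le_div_iff₀ (by linarith)] at h2
    linarith
end

section
/- Let C ≥ 2 and let v ∈ ℝ^C satisfy ∑_{i=1}^C v_i ≥ √(C−1) · ‖v‖₂. Then v_k ≥ 0 for every k ∈ {1, …, C}. Equivalently, the cone R = {v ∈ ℝ^C : ∑_{i=1}^C v_i ≥ √(C−1) · ‖v‖₂} is contained in the nonnegative orthant of ℝ^C. -/
open Matrix BigOperators

/-- The cone `R` is contained in the nonnegative orthant. -/
theorem Rcone_subset_nonneg_orthant
    {C : ℕ} (hC : 2 ≤ C) (v : Fin C → ℝ) (hv : v ∈ Rcone C) :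
    ∀ k, 0 ≤ v k := by
  intro k
  by_contra! hk
  have h : Real.sqrt ((C : ℝ) - 1) * Real.sqrt (∑ i, v i ^ 2) ≤ ∑ i, v i := hv
  have hC1 : (0 : ℝ) ≤ (C : ℝ) - 1 := by
    have : (2 : ℝ) ≤ C := by exact_mod_cast hC
    linarith
  have hQ0 : 0 ≤ ∑ i, v i ^ 2 := Finset.sum_nonneg (fun i _ => sq_nonneg _)
  have hS0 : 0 ≤ ∑ i, v i := le_trans (by positivity) h
  have h2 : ((C : ℝ) - 1) * (∑ i, v i ^ 2) ≤ (∑ i, v i) ^ 2 := by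
    have := pow_le_pow_left₀ (by positivity) h 2
    rwa [mul_pow, Real.sq_sqrt hC1, Real.sq_sqrt hQ0] at this
  have hS := Finset.add_sum_erase Finset.univ v (Finset.mem_univ k)
  have hQ := Finset.add_sum_erase Finset.univ (fun i => v i ^ 2) (Finset.mem_univ k)
  have hcs := sq_sum_le_card_mul_sum_sq (s := Finset.univ.erase k) (f := v)
  have hcard : (((Finset.univ.erase k).card : ℕ) : ℝ) = (C : ℝ) - 1 := by
    rw [Finset.card_erase_of_mem (Finset.mem_univ k), Finset.card_univ, Fintype.card_fin,
      Nat.cast_sub (by omega)]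
    simp
  rw [hcard] at hcs
  rw [← hQ] at h2
  have h3 : 0 ≤ ((C : ℝ) - 1) * v k ^ 2 := mul_nonneg hC1 (sq_nonneg _)
  rw [mul_add] at h2
  nlinarith
end

section
/- Let Q be a real orthogonal C×C matrix such that every standard basis vector e_i of ℝ^C lies in cone(Q), the conical hull of the columns of Q (equivalently, the nonnegative orthant of ℝ^C is contained in cone(Q)). Then Q is a permutation matrix. -/
open Matrix BigOperators

/-- If an orthogonal matrix's cone contains the nonnegative orthant (equivalently, all
standard basis vectors), it is a permutation matrix. -/
theorem orthogonal_cone_contains_orthant_is_perm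
    {C : ℕ} (Q : Matrix (Fin C) (Fin C) ℝ)
    (hQ : Qᵀ * Q = 1)
    (hbasis : ∀ i : Fin C, (Pi.single i 1 : Fin C → ℝ) ∈ coneOf Q) :
    IsPermMatrix Q := by
  have hnn : ∀ i j, 0 ≤ Q i j := by
    intro i j
    obtain ⟨α, hα, h⟩ := hbasis i
    have h2 : Qᵀ.mulVec (Pi.single i 1) = α := by
      rw [h, Matrix.mulVec_mulVec, hQ, Matrix.one_mulVec]
    have h3 := congrFun h2 j
    simp at h3
    rw [h3]
    exact hα j
  have hsum : ∀ j k, ∑ i, Q i j * Q i k = if j = k then 1 else 0 := by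
    intro j k
    have h := congrFun (congrFun hQ j) k
    simpa [Matrix.mul_apply, Matrix.one_apply] using h
  have hz : ∀ i j k, j ≠ k → Q i j * Q i k = 0 := by
    intro i j k hjk
    have h := hsum j k
    rw [if_neg hjk, Finset.sum_eq_zero_iff_of_nonneg
      (fun i _ => mul_nonneg (hnn i j) (hnn i k))] at h
    exact h i (Finset.mem_univ i)
  have hex : ∀ j, ∃ i, Q i j ≠ 0 := by
    intro j
    by_contra! hc
    have h := hsum j j
    simp [hc] at h
  choose f hf using hex
  have hinj : Function.Injective f := by
    intro j k hjk
    by_contra hne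
    have h := hz (f j) j k hne
    rcases mul_eq_zero.mp h with h | h
    · exact hf j h
    · rw [hjk] at h
      exact hf k h
  have hbij : Function.Bijective f := Finite.injective_iff_bijective.mp hinj
  have hzero : ∀ i j, i ≠ f j → Q i j = 0 := by
    intro i j hij
    obtain ⟨k, rfl⟩ := hbij.2 i
    have hkj : k ≠ j := fun h => hij (by rw [h])
    exact (mul_eq_zero.mp (hz (f k) k j hkj)).resolve_left (hf k)
  refine ⟨Equiv.ofBijective f hbij, fun i j => ?_⟩
  rw [Equiv.ofBijective_apply]
  split_ifs with h
  · subst h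
    have h := hsum j j
    rw [if_pos rfl, Finset.sum_eq_single (f j)
      (fun i _ hi => by rw [hzero i j hi, zero_mul]) (by simp)] at h
    nlinarith [hnn (f j) j]
  · exact hzero i j h
end

section
/- Let A be a real C×C matrix such that every column satisfies ‖A_{:,i}‖₂ ≤ ∑_{j=1}^C A_{ji} (the Euclidean norm of each column is at most its entrywise sum), and suppose the total sum of all entries of A equals C, i.e. 𝟙ᵀA𝟙 = C. Then |det A| ≤ 1. -/
open Matrix BigOperators

theorem hadamard_aux {C : ℕ} (A : Matrix (Fin C) (Fin C) ℝ) :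
    |A.det| ≤ ∏ i, euclNorm (fun j => A j i) := by
  haveI : Fact (Module.finrank ℝ (EuclideanSpace ℝ (Fin C)) = C) := ⟨by simp⟩
  let b := EuclideanSpace.basisFun (Fin C) ℝ
  let v : Fin C → EuclideanSpace ℝ (Fin C) := fun i => WithLp.toLp 2 (fun j => A j i)
  have h := (b.toBasis.orientation).abs_volumeForm_apply_le v
  rw [Orientation.volumeForm_robust' _ b, Module.Basis.det_apply] at h
  have hA : b.toBasis.toMatrix v = A := by
    ext i j
    simp [Module.Basis.toMatrix_apply, b, v]
  rw [hA] at h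
  refine h.trans (le_of_eq (Finset.prod_congr rfl fun i _ => ?_))
  simp [EuclideanSpace.norm_eq, euclNorm, v]

/-- Determinant bound: if each column's Euclidean norm is at most its entrywise sum and
the total entry sum is `C`, then `|det A| ≤ 1`. -/
theorem abs_det_le_one_of_col_norm_le_sum
    {C : ℕ} (A : Matrix (Fin C) (Fin C) ℝ)
    (hcol : ∀ i : Fin C, euclNorm (fun j => A j i) ≤ ∑ j, A j i)
    (htotal : ∑ i, ∑ j, A i j = (C : ℝ)) :
    |A.det| ≤ 1 := by
  refine (hadamard_aux A).trans ?_
  have h1 : ∏ i, euclNorm (fun j => A j i) ≤ ∏ i, Real.exp ((∑ j, A j i) - 1) := by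
    refine Finset.prod_le_prod (fun i _ => Real.sqrt_nonneg _) fun i _ => ?_
    have := Real.add_one_le_exp ((∑ j, A j i) - 1)
    linarith [hcol i]
  refine h1.trans (le_of_eq ?_)
  rw [← Real.exp_sum, Finset.sum_sub_distrib, Finset.sum_comm, htotal]
  simp
end

section
/- Let A be a real C×C matrix such that every column satisfies ‖A_{:,i}‖₂ ≤ ∑_{j=1}^C A_{ji}, the total sum of all entries of A equals C (𝟙ᵀA𝟙 = C), and |det A| = 1. Then A is an orthogonal matrix (AᵀA = I) and each column of A sums to 1 (𝟙ᵀA = 𝟙ᵀ). -/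
open Matrix BigOperators

theorem prod_le_one_aux_s8 {C : ℕ} (z : Fin C → ℝ) (hz : ∀ i, 0 < z i) (hs : ∑ i, z i ≤ C) :
    ∏ i, z i ≤ 1 ∧ (1 ≤ ∏ i, z i → ∀ i, z i = 1) := by
  have hlog : Real.log (∏ i, z i) = ∑ i, Real.log (z i) :=
    Real.log_prod (fun i _ => (hz i).ne')
  have hpos : 0 < ∏ i, z i := Finset.prod_pos (fun i _ => hz i)
  have hsum : ∑ i, (z i - 1) ≤ 0 := by
    rw [Finset.sum_sub_distrib]; simp; exact hs
  have hle : ∑ i, Real.log (z i) ≤ ∑ i, (z i - 1) :=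
    Finset.sum_le_sum (fun i _ => Real.log_le_sub_one_of_pos (hz i))
  refine ⟨?_, fun h1 i => ?_⟩
  · rw [← Real.log_nonpos_iff hpos.le, hlog]; linarith
  · have h2 : 0 ≤ ∑ i, Real.log (z i) := by rw [← hlog]; exact Real.log_nonneg h1
    have heq : ∑ i, Real.log (z i) = ∑ i, (z i - 1) := by linarith
    have h3 := (Finset.sum_eq_sum_iff_of_le
      (fun i _ => Real.log_le_sub_one_of_pos (hz i))).1 heq i (Finset.mem_univ i)
    by_contra hne
    exact absurd h3 (Real.log_lt_sub_one_of_pos (hz i) hne).ne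

theorem posDef_eq_one_aux {C : ℕ} (G : Matrix (Fin C) (Fin C) ℝ) (hG : G.PosDef)
    (ht : G.trace ≤ C) (hd : 1 ≤ G.det) : G = 1 := by
  have htr : G.trace = ∑ i, hG.isHermitian.eigenvalues i := by
    simpa using hG.isHermitian.trace_eq_sum_eigenvalues
  have hdt : G.det = ∏ i, hG.isHermitian.eigenvalues i := by
    simpa using hG.isHermitian.det_eq_prod_eigenvalues
  have h1 := (prod_le_one_aux_s8 hG.isHermitian.eigenvalues hG.eigenvalues_pos
    (htr ▸ ht)).2 (hdt ▸ hd)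
  have h2 := hG.isHermitian.spectral_theorem
  have h3 : (RCLike.ofReal ∘ hG.isHermitian.eigenvalues : Fin C → ℝ) = fun _ => 1 := by
    funext i; simp [h1 i]
  rw [h3, Matrix.diagonal_one, map_one] at h2
  exact h2

/-- Equality case of the determinant bound: `A` is orthogonal and each column sums to 1. -/
theorem det_bound_equality_case
    {C : ℕ} (A : Matrix (Fin C) (Fin C) ℝ)
    (hcol : ∀ i : Fin C, euclNorm (fun j => A j i) ≤ ∑ j, A j i)
    (htotal : ∑ i, ∑ j, A i j = (C : ℝ))
    (hdet : |A.det| = 1) :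
    Aᵀ * A = 1 ∧ ∀ i : Fin C, ∑ j, A j i = 1 := by
  have hdet0 : A.det ≠ 0 := by intro h; simp [h] at hdet
  set s : Fin C → ℝ := fun i => ∑ j, A j i with hs
  have hn : ∀ i, 0 ≤ ∑ j, A j i ^ 2 := fun i => Finset.sum_nonneg (fun j _ => sq_nonneg _)
  have hs0 : ∀ i, 0 ≤ s i := fun i => (Real.sqrt_nonneg _).trans (hcol i)
  have hsq : ∀ i, ∑ j, A j i ^ 2 ≤ s i ^ 2 := fun i => (Real.sqrt_le_left (hs0 i)).1 (hcol i)
  have hspos : ∀ i, 0 < s i := by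
    intro i
    refine lt_of_le_of_ne (hs0 i) (fun h => hdet0 ?_)
    have h1 : ∑ j, A j i ^ 2 = 0 := le_antisymm (by simpa [← h] using hsq i) (hn i)
    have h2 := (Finset.sum_eq_zero_iff_of_nonneg (fun j _ => sq_nonneg (A j i))).1 h1
    exact Matrix.det_eq_zero_of_column_eq_zero i
      (fun j => by simpa using h2 j (Finset.mem_univ j))
  have hssum : ∑ i, s i ≤ C := by rw [← htotal, Finset.sum_comm]
  obtain ⟨hp1, hp2⟩ := prod_le_one_aux_s8 s hspos hssum
  have hppos : 0 < ∏ i, s i := Finset.prod_pos (fun i _ => hspos i)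
  set B : Matrix (Fin C) (Fin C) ℝ := A * Matrix.diagonal (fun i => (s i)⁻¹) with hB
  have hBdet : B.det = A.det * (∏ i, s i)⁻¹ := by
    rw [hB, Matrix.det_mul, Matrix.det_diagonal, Finset.prod_inv_distrib]
  have hA2 : A.det * A.det = 1 := by rw [← abs_mul_abs_self, hdet, one_mul]
  have hGdet : (Bᵀ * B).det = ((∏ i, s i)⁻¹) ^ 2 := by
    rw [Matrix.det_mul, Matrix.det_transpose, hBdet]
    linear_combination ((∏ i, s i)⁻¹) ^ 2 * hA2
  have hG : (Bᵀ * B).PosDef := by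
    have hu : IsUnit B := by
      rw [Matrix.isUnit_iff_isUnit_det, isUnit_iff_ne_zero, hBdet]
      exact mul_ne_zero hdet0 (inv_ne_zero hppos.ne')
    have := Matrix.PosDef.conjTranspose_mul_self B (Matrix.mulVec_injective_of_isUnit hu)
    simpa using this
  have hGt : (Bᵀ * B).trace ≤ C := by
    have : ∀ i ∈ Finset.univ, (Bᵀ * B) i i ≤ 1 := by
      intro i _
      have : (Bᵀ * B) i i = (∑ j, A j i ^ 2) / s i ^ 2 := by
        rw [Matrix.mul_apply, Finset.sum_div]
        refine Finset.sum_congr rfl fun j _ => ?_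
        rw [Matrix.transpose_apply, hB, Matrix.mul_diagonal]
        have := (hspos i).ne'
        field_simp
      rw [this, div_le_one (pow_pos (hspos i) 2)]
      exact hsq i
    simpa [Matrix.trace] using Finset.sum_le_sum this
  have hinv : 1 ≤ (∏ i, s i)⁻¹ := (one_le_inv₀ hppos).2 hp1
  have hG1 := posDef_eq_one_aux _ hG hGt (by rw [hGdet]; exact one_le_pow₀ hinv)
  have hd1 : ((∏ i, s i)⁻¹) ^ 2 = 1 := by rw [← hGdet, hG1, Matrix.det_one]
  have hpe : (∏ i, s i)⁻¹ = 1 := by nlinarith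
  have hs1 := hp2 (inv_eq_one.1 hpe).ge
  have hBA : B = A := by rw [hB]; simp [hs1]
  exact ⟨by rw [← hBA]; exact hG1, hs1⟩
end

section
/- Let T be a real C×C matrix satisfying T_ii > T_ji for all j ≠ i (each diagonal entry is the strict maximum of its column), and let Π be a C×C permutation matrix such that the matrix ΠT also satisfies (ΠT)_ii > (ΠT)_ji for all j ≠ i. Then Π is the identity matrix. -/
open Matrix BigOperators

/-- If both `T` and `Π * T` are diagonally dominant and `Π` is a permutation matrix,
then `Π` is the identity. -/
theorem perm_of_diag_dominant_is_id
    {C : ℕ} (T Pi : Matrix (Fin C) (Fin C) ℝ)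
    (hT : DiagDominant T)
    (hPi : IsPermMatrix Pi)
    (hPiT : DiagDominant (Pi * T)) :
    Pi = 1 := by
  obtain ⟨σ, hσ⟩ := hPi
  have key : ∀ j k, (Pi * T) (σ j) k = T j k := by
    intro j k
    simp [Matrix.mul_apply, hσ]
  have hid : ∀ i, σ i = i := by
    intro i
    by_contra hne
    have h1 := hPiT i (σ i) hne
    have h2 := key (σ.symm i) i
    rw [Equiv.apply_symm_apply] at h2
    rw [key, h2] at h1
    have h3 : σ.symm i ≠ i := fun h => hne ((Equiv.symm_apply_eq σ).1 h).symm
    exact lt_asymm h1 (hT i _ h3)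
  ext i j
  rw [hσ, hid, Matrix.one_apply]
end

section
/- Let C ≥ 2 and let A be an invertible real C×C matrix such that R ⊆ cone(A^{-⊤}), where R = {v ∈ ℝ^C : ∑_{i=1}^C v_i ≥ √(C−1) · ‖v‖₂} and cone(A^{-⊤}) is the conical hull of the columns of the inverse transpose of A. Then every column of A satisfies ‖A_{:,i}‖₂ ≤ ∑_{j=1}^C A_{ji}. -/
open Matrix BigOperators

lemma aux_dual {C : ℕ} (hC : 2 ≤ C) (y : Fin C → ℝ)
    (hy : ∀ x ∈ Rcone C, 0 ≤ ∑ i, y i * x i) : euclNorm y ≤ ∑ i, y i := by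
  have hn : (2:ℝ) ≤ (C:ℝ) := by exact_mod_cast hC
  have mem : ∀ x : Fin C → ℝ, 0 ≤ ∑ i, x i →
      ((C:ℝ) - 1) * (∑ i, x i ^ 2) ≤ (∑ i, x i) ^ 2 → x ∈ Rcone C := by
    intro x h0 h
    show Real.sqrt ((C : ℝ) - 1) * Real.sqrt (∑ i, x i ^ 2) ≤ ∑ i, x i
    rw [← Real.sqrt_mul (by linarith)]
    exact Real.sqrt_le_iff.mpr ⟨h0, h⟩
  obtain ⟨s, hs⟩ : ∃ s, s = ∑ i, y i := ⟨_, rfl⟩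
  obtain ⟨N, hN⟩ : ∃ N, N = ∑ i, y i ^ 2 := ⟨_, rfl⟩
  obtain ⟨n, hnn⟩ : ∃ n : ℝ, n = (C:ℝ) := ⟨_, rfl⟩
  rw [← hnn] at hn mem
  have s0 : 0 ≤ s := by
    have h := hy (fun _ => 1) (mem _ (by simp) (by simp [← hnn]; nlinarith))
    simpa [hs] using h
  obtain ⟨m, hm⟩ : ∃ m, m * n = s := ⟨s / n, by field_simp⟩
  obtain ⟨W, hW⟩ : ∃ W, W = ∑ i, (y i - m) ^ 2 := ⟨_, rfl⟩
  have W0 : 0 ≤ W := hW ▸ Finset.sum_nonneg (fun i _ => sq_nonneg _)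
  have hWN : W = N - m * s := by
    have : ∀ i, (y i - m) ^ 2 = y i ^ 2 - 2 * m * y i + m ^ 2 := fun i => by ring
    simp only [hW, this, Finset.sum_add_distrib, Finset.sum_sub_distrib, ← Finset.mul_sum,
      Finset.sum_const, Finset.card_univ, Fintype.card_fin, nsmul_eq_mul]
    rw [← hs, ← hN, ← hnn, ← hm]; ring
  obtain ⟨a, a0, ha⟩ : ∃ a : ℝ, 0 ≤ a ∧ a ^ 2 * n = (n - 1) * W := by
    refine ⟨Real.sqrt ((n - 1) * W / n), Real.sqrt_nonneg _, ?_⟩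
    have : 0 ≤ (n - 1) * W := mul_nonneg (by linarith) W0
    rw [Real.sq_sqrt (by positivity)]
    field_simp
  have e1 : ∑ i, (a + m - y i) = a * n := by
    simp only [Finset.sum_sub_distrib, 
      Finset.sum_const, Finset.card_univ, Fintype.card_fin, nsmul_eq_mul]
    rw [← hs, ← hnn, ← hm]; ring
  have e2 : ∑ i, (a + m - y i) ^ 2 = a ^ 2 * n + W := by
    have : ∀ i, (a + m - y i) ^ 2 = y i ^ 2 - 2 * (a + m) * y i + (a + m) ^ 2 := fun i => by ring
    simp only [this, Finset.sum_add_distrib, Finset.sum_sub_distrib, ← Finset.mul_sum,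
      Finset.sum_const, Finset.card_univ, Fintype.card_fin, nsmul_eq_mul]
    rw [← hs, ← hN, ← hnn, hWN, ← hm]; ring
  have e3 : ∑ i, y i * (a + m - y i) = a * s - W := by
    have : ∀ i, y i * (a + m - y i) = (a + m) * y i - y i ^ 2 := fun i => by ring
    simp only [this, Finset.sum_sub_distrib, ← Finset.mul_sum]
    rw [← hs, ← hN, hWN]; ring
  have key := hy (fun i => a + m - y i) (mem _ (by rw [e1]; positivity) (by
    rw [e1, e2]
    have : (a * n) ^ 2 = n * (a ^ 2 * n) := by ring
    rw [this, ha]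
    apply le_of_eq; ring))
  simp only [e3] at key
  unfold euclNorm
  rw [← hs, ← hN]
  refine Real.sqrt_le_iff.mpr ⟨s0, ?_⟩
  have h1 : n * W ≤ (n - 1) * s ^ 2 := by
    rcases W0.eq_or_lt with h | h
    · rw [← h]; nlinarith [sq_nonneg s]
    · have h2 : W ^ 2 ≤ (a * s) ^ 2 := pow_le_pow_left₀ W0 (by linarith) 2
      have h3 : W * (n * W) ≤ W * ((n - 1) * s ^ 2) := by
        calc W * (n * W) = n * W ^ 2 := by ring
          _ ≤ n * (a * s) ^ 2 := by gcongr
          _ = (a ^ 2 * n) * s ^ 2 := by ring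
          _ = _ := by rw [ha]; ring
      exact le_of_mul_le_mul_left h3 h
  have h4 : n * N ≤ n * s ^ 2 := by
    have : n * N = n * W + s ^ 2 := by rw [hWN, ← hm]; ring
    linarith
  exact le_of_mul_le_mul_left h4 (by linarith)

/-- If `R ⊆ cone(A^{-⊤})`, then every column of `A` has Euclidean norm at most its
entrywise sum. -/
theorem col_norm_le_sum_of_Rcone_subset_inv_transpose
    {C : ℕ} (hC : 2 ≤ C) (A : Matrix (Fin C) (Fin C) ℝ)
    (hA : IsUnit A.det)
    (hsub : Rcone C ⊆ coneOf (A⁻¹)ᵀ) :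
    ∀ i : Fin C, euclNorm (fun j => A j i) ≤ ∑ j, A j i := by
  intro i
  refine aux_dual hC (fun j => A j i) ?_
  intro x hx
  obtain ⟨α, h0, rfl⟩ := hsub hx
  have h : Aᵀ.mulVec ((A⁻¹)ᵀ.mulVec α) = α := by
    rw [Matrix.mulVec_mulVec, ← Matrix.transpose_mul, Matrix.nonsing_inv_mul _ hA]
    simp
  have h2 := congrFun h i
  have h3 : ∑ j, A j i * ((A⁻¹)ᵀ.mulVec α) j = α i := h2
  rw [h3]; exact h0 i
end

section
/- Let C ≥ 2 and let H be a real C×m matrix satisfying condition (2) of the sufficiently scattered assumption: for every real orthogonal C×C matrix Q that is not a permutation matrix, cone(H) is not a subset of cone(Q). Let B be an invertible real C×C matrix whose columns are pairwise orthogonal, and suppose cone(H) ⊆ cone(B). Then there exists a permutation σ of {1, …, C} such that for every i, the i-th column of B equals ‖B_{:,i}‖₂ · e_{σ(i)}, i.e. each column of B is a positive scalar multiple of a distinct standard basis vector. -/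
open Matrix BigOperators

/-- If `H` satisfies condition (2) of the sufficiently scattered assumption and `B` is an
invertible matrix with pairwise orthogonal columns whose cone contains `cone(H)`, then
each column of `B` is a positive scalar multiple of a distinct standard basis vector. -/
theorem column_orthogonal_enclosing_is_scaled_perm
    {C m : ℕ} (hC : 2 ≤ C) (H : Matrix (Fin C) (Fin m) ℝ)
    (hcond2 : ∀ Q : Matrix (Fin C) (Fin C) ℝ, Qᵀ * Q = 1 → ¬ IsPermMatrix Q →
      ¬ (coneOf H ⊆ coneOf Q))
    (B : Matrix (Fin C) (Fin C) ℝ)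
    (hBinv : IsUnit B.det)
    (hBorth : ∀ i j : Fin C, i ≠ j → ∑ k, B k i * B k j = 0)
    (hsub : coneOf H ⊆ coneOf B) :
    ∃ σ : Equiv.Perm (Fin C), ∀ i : Fin C,
      (fun k => B k i) = euclNorm (fun k => B k i) • (Pi.single (σ i) 1 : Fin C → ℝ) := by
  have hpos : ∀ i, 0 < ∑ k, B k i ^ 2 := by
    intro i
    have h0 : 0 ≤ ∑ k, B k i ^ 2 := Finset.sum_nonneg fun k _ => sq_nonneg _
    refine lt_of_le_of_ne h0 fun h => ?_
    have hz : ∀ k, B k i = 0 := by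
      intro k
      have := (Finset.sum_eq_zero_iff_of_nonneg (fun k _ => sq_nonneg (B k i))).1 h.symm k
        (Finset.mem_univ k)
      exact pow_eq_zero_iff (two_ne_zero) |>.1 this
    exact hBinv.ne_zero (Matrix.det_eq_zero_of_column_eq_zero i hz)
  have hn : ∀ i, 0 < euclNorm (fun k => B k i) := fun i => Real.sqrt_pos.2 (hpos i)
  have hsq : ∀ i, euclNorm (fun k => B k i) * euclNorm (fun k => B k i) = ∑ k, B k i ^ 2 :=
    fun i => Real.mul_self_sqrt (hpos i).le
  generalize hN : (fun i => euclNorm (fun k => B k i)) = N at *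
  have hN' : ∀ i, euclNorm (fun k => B k i) = N i := fun i => congrFun hN i
  simp only [hN'] at hn hsq ⊢
  have hP : IsPermMatrix (Matrix.of fun k i => B k i / N i) := by
    by_contra hnp
    refine hcond2 _ ?_ hnp ?_
    · ext i j
      have e : ∀ k, B k i / N i * (B k j / N j) = B k i * B k j / (N i * N j) := fun k =>
        div_mul_div_comm _ _ _ _
      simp only [Matrix.mul_apply, Matrix.transpose_apply, Matrix.of_apply, e]
      rw [← Finset.sum_div]
      by_cases hij : i = j
      · subst hij
        rw [Matrix.one_apply_eq, hsq]
        simp only [← pow_two]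
        exact div_self (hpos i).ne'
      · rw [hBorth i j hij, Matrix.one_apply_ne hij, zero_div]
    · intro v hv
      obtain ⟨α, hα, rfl⟩ := hsub hv
      refine ⟨fun j => N j * α j, fun j => mul_nonneg (hn j).le (hα j), ?_⟩
      ext k
      simp only [Matrix.mulVec, dotProduct, Matrix.of_apply]
      refine Finset.sum_congr rfl fun j _ => ?_
      have := (hn j).ne'
      field_simp
  obtain ⟨σ, hσ⟩ := hP
  refine ⟨σ, fun i => ?_⟩
  ext k
  have h := hσ k i
  rw [Matrix.of_apply, div_eq_iff (hn i).ne'] at h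
  simp only [Pi.smul_apply, Pi.single_apply, smul_eq_mul]
  rw [h, mul_comm]
end
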